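/- arXiv:1511.04190 — 3 statements merged into one kernel-verified Lean document; each statement's English description precedes it below -/
import Mathlib

section
/- Let G be a 3-regular simple graph on vertex set {1,…,n} with edge set E, and let W ⊆ {1,…,n} be a vertex cover of G with |W| = k. Identify candidates with vertices and, for each i ∈ {1,…,n}, define the vote S_i = { j : {i,j} ∈ E }. Set the committee C* = W and the set of non-outlier indices I = {1,…,n} ∖ W. Then Σ_{i∈I} (|C* ∖ S_i| − |C* ∩ S_i|) = (n−k)(k−6) (as an equality of integers). -/
/-!
A vertex of degree `d` outside a vertex cover `W` has all its neighbours in `W`, so its vote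
approves exactly `d` members of the committee `W` and disapproves the remaining `|W| - d`. Its
net disapproval score is therefore `|W| - 2d`.
-/

open Finset

/-- The net disapproval score of the committee `X` in the approval vote `S`, taken in `ℤ` since
the approvals may outnumber the disapprovals. -/
def netDisapproval {α : Type*} [DecidableEq α] (X S : Finset α) : ℤ :=
  #(X \ S) - #(X ∩ S)

theorem netDisapproval_of_subset {α : Type*} [DecidableEq α] {X S : Finset α} (h : S ⊆ X) :
    netDisapproval X S = #X - 2 * #S := by
  rw [netDisapproval, cast_card_sdiff h, inter_eq_right.mpr h]
  ring

section VertexCover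

variable {V : Type*} {G : SimpleGraph V} {W : Finset V}

theorem neighborFinset_subset_of_isVertexCover (hW : G.IsVertexCover W) {v : V}
    [Fintype (G.neighborSet v)] (hv : v ∉ W) : G.neighborFinset v ⊆ W := by
  intro u hu
  exact mod_cast (hW ((G.mem_neighborFinset v u).mp hu)).resolve_left hv

theorem netDisapproval_neighborFinset [DecidableEq V] (hW : G.IsVertexCover W) {v : V}
    [Fintype (G.neighborSet v)] (hv : v ∉ W) :
    netDisapproval W (G.neighborFinset v) = #W - 2 * G.degree v := by
  rw [netDisapproval_of_subset (neighborFinset_subset_of_isVertexCover hW hv),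
    G.card_neighborFinset_eq_degree]

theorem stmt_2_general [Fintype V] [DecidableEq V] [G.LocallyFinite] {d : ℕ}
    (hW : G.IsVertexCover W) (hdeg : ∀ v ∉ W, G.degree v = d) :
    ∑ v ∈ univ \ W, netDisapproval W (G.neighborFinset v) =
      ((Fintype.card V : ℤ) - #W) * (#W - 2 * d) := by
  have score_eq : ∀ v ∈ univ \ W, netDisapproval W (G.neighborFinset v) = #W - 2 * d := by
    intro v hv
    have hvW : v ∉ W := (mem_sdiff.mp hv).2
    rw [netDisapproval_neighborFinset hW hvW, hdeg v hvW]
  rw [sum_congr rfl score_eq, sum_const, nsmul_eq_mul, cast_card_sdiff (subset_univ W), card_univ]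

end VertexCover

/-- For a 3-regular graph `G` on vertices `Fin n`, a vertex cover `W` of
size `k`, votes `S i = neighborFinset i`, committee `W`, and non-outliers
`I = univ \ W`, the net disapproval score `∑_{i ∈ I} (|W \ S i| - |W ∩ S i|)`
equals `(n - k)(k - 6)`. -/
theorem stmt_2 (n k : ℕ) (G : SimpleGraph (Fin n)) [DecidableRel G.Adj]
    (hreg : G.IsRegularOfDegree 3)
    (W : Finset (Fin n)) (hW : W.card = k)
    (hcover : ∀ u v : Fin n, G.Adj u v → u ∈ W ∨ v ∈ W) :
    (∑ i ∈ Finset.univ \ W,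
        (((W \ G.neighborFinset i).card : ℤ) - ((W ∩ G.neighborFinset i).card : ℤ)))
      = ((n : ℤ) - (k : ℤ)) * ((k : ℤ) - 6) := by
  have cover : G.IsVertexCover W := fun u v huv ↦ hcover u v huv
  simpa [netDisapproval, hW] using stmt_2_general cover fun v _ ↦ hreg v
end

section
/- Let G be a simple graph with vertex set {1,…,n} and edges e_1,…,e_m (each edge a 2-element set of vertices), and let k ≤ n. Identify candidates with vertices and, for each edge index i ∈ {1,…,m}, define the vote S_i = e_i (so every vote approves exactly two candidates). Then G contains a clique of size k if and only if there exist a committee C* ⊆ {1,…,n} with |C*| = k and an index set I ⊆ {1,…,m} with |I| ≥ k(k−1)/2 such that Σ_{i∈I} |C* ∖ S_i| ≤ (k−2)·k(k−1)/2 (as integers). -/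
/-!
A committee `C` disapproves of at least `|C| - |S|` of its members under a vote `S`, with equality
exactly when `S ⊆ C`. For `|C| = k` and votes `e i` of size `r`, a total score of at most
`(k - r) * |I|` over `i ∈ I` therefore means that all these votes are contained in `C`. As `C` has
only `k.choose r` subsets of size `r`, that many distinct votes contained in `C` exhaust them; for
`r = 2` this says that `C` is a clique.
-/

open Finset

variable {α ι : Type*} [DecidableEq α]

theorem card_sub_card_le_card_sdiff (C S : Finset α) : (#C : ℤ) - #S ≤ #(C \ S) := by
  have := le_card_sdiff S C
  lia

theorem card_sub_card_eq_card_sdiff_iff {C S : Finset α} :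
    (#C : ℤ) - #S = #(C \ S) ↔ S ⊆ C := by
  refine ⟨fun h ↦ ?_, fun h ↦ (cast_card_sdiff h).symm⟩
  have := card_sdiff_add_card_inter C S
  exact inter_eq_right.mp (eq_of_subset_of_card_le inter_subset_right (by lia))

/-- The disapproval score of the committee `C` over the votes `e i` with `i ∈ I`. It is
integer-valued because it is compared with multiples of `#C - r`, which may be negative. -/
def disapprovalScore (e : ι → Finset α) (I : Finset ι) (C : Finset α) : ℤ :=
  ∑ i ∈ I, (#(C \ e i) : ℤ)

theorem disapprovalScore_le_sum_iff {e : ι → Finset α} {I : Finset ι} {C : Finset α} :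
    disapprovalScore e I C ≤ ∑ i ∈ I, ((#C : ℤ) - #(e i)) ↔ ∀ i ∈ I, e i ⊆ C := by
  have hle : ∀ i ∈ I, (#C : ℤ) - #(e i) ≤ #(C \ e i) :=
    fun i _ ↦ card_sub_card_le_card_sdiff C (e i)
  rw [disapprovalScore, (sum_le_sum hle).ge_iff_eq, sum_eq_sum_iff_of_le hle]
  exact forall₂_congr fun _ _ ↦ card_sub_card_eq_card_sdiff_iff

theorem disapprovalScore_le_mul_card_iff {e : ι → Finset α} {I : Finset ι} {r : ℕ}
    (he : ∀ i ∈ I, #(e i) = r) {C : Finset α} :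
    disapprovalScore e I C ≤ ((#C : ℤ) - r) * #I ↔ ∀ i ∈ I, e i ⊆ C := by
  have hsum : ∑ i ∈ I, ((#C : ℤ) - #(e i)) = ((#C : ℤ) - r) * #I := by
    rw [sum_congr rfl fun i hi ↦ by rw [he i hi], sum_const, nsmul_eq_mul, mul_comm]
  rw [← hsum, disapprovalScore_le_sum_iff]

theorem exists_disapprovalScore_le_of_powersetCard_subset_range {e : ι → Finset α} {r : ℕ}
    {C : Finset α} (hC : (C.powersetCard r : Set (Finset α)) ⊆ Set.range e) :
    ∃ I : Finset ι, (#C).choose r ≤ #I ∧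
      disapprovalScore e I C ≤ ((#C : ℤ) - r) * (#C).choose r := by
  have hsurj : Set.SurjOn e Set.univ (C.powersetCard r) := by
    rwa [Set.SurjOn, Set.image_univ]
  obtain ⟨I, -, hinj, himage⟩ := exists_subset_injOn_image_eq_of_surjOn _ _ hsurj
  have hI : ∀ i ∈ I, e i ⊆ C ∧ #(e i) = r := fun i hi ↦
    mem_powersetCard.mp (himage ▸ mem_image_of_mem e hi)
  have hcard : #I = (#C).choose r := by
    rw [← card_powersetCard, ← himage, card_image_of_injOn hinj]
  refine ⟨I, hcard.ge, ?_⟩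
  rw [← hcard, disapprovalScore_le_mul_card_iff fun i hi ↦ (hI i hi).2]
  exact fun i hi ↦ (hI i hi).1

theorem powersetCard_subset_range_of_disapprovalScore_le {e : ι → Finset α} {I : Finset ι}
    (hinj : Set.InjOn e I) {r : ℕ} (he : ∀ i ∈ I, #(e i) = r) {C : Finset α}
    (hI : (#C).choose r ≤ #I)
    (hscore : disapprovalScore e I C ≤ ((#C : ℤ) - r) * (#C).choose r) :
    (C.powersetCard r : Set (Finset α)) ⊆ Set.range e := by
  obtain hlt | hle := lt_or_ge (#C) r
  · simp [powersetCard_eq_empty.mpr hlt]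
  have hsub : ∀ i ∈ I, e i ⊆ C := by
    rw [← disapprovalScore_le_mul_card_iff he]
    calc disapprovalScore e I C ≤ ((#C : ℤ) - r) * (#C).choose r := hscore
      _ ≤ ((#C : ℤ) - r) * #I := by gcongr; lia
  have hmaps : Set.MapsTo e I (C.powersetCard r) := fun i hi ↦
    mem_coe.mpr (mem_powersetCard.mpr ⟨hsub i hi, he i hi⟩)
  have hsurj : Set.SurjOn e I (C.powersetCard r) :=
    surjOn_of_injOn_of_card_le e hmaps hinj (by rwa [card_powersetCard])
  exact hsurj.trans (Set.image_subset_range e I)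

theorem powersetCard_two_subset_iff {W : Finset α} {F : Set (Finset α)} :
    (W.powersetCard 2 : Set (Finset α)) ⊆ F ↔ ∀ u ∈ W, ∀ v ∈ W, u ≠ v → {u, v} ∈ F := by
  constructor
  · intro h u hu v hv huv
    have hsub : {u, v} ⊆ W := insert_subset hu (singleton_subset_iff.mpr hv)
    exact h (mem_coe.mpr (mem_powersetCard.mpr ⟨hsub, card_pair huv⟩))
  · intro h s hs
    obtain ⟨hsW, hs2⟩ := mem_powersetCard.mp (mem_coe.mp hs)
    obtain ⟨u, v, huv, rfl⟩ := card_eq_two.mp hs2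
    exact h u (hsW (by simp)) v (hsW (by simp)) huv

theorem stmt_6_general (k r : ℕ) (e : ι → Finset α) (he : ∀ i, #(e i) = r)
    (hinj : Function.Injective e) :
    (∃ W : Finset α, #W = k ∧ (W.powersetCard r : Set (Finset α)) ⊆ Set.range e) ↔
      ∃ (C : Finset α) (I : Finset ι), #C = k ∧ k.choose r ≤ #I ∧
        disapprovalScore e I C ≤ ((k : ℤ) - r) * k.choose r := by
  constructor
  · rintro ⟨W, rfl, hW⟩
    obtain ⟨I, hI, hscore⟩ := exists_disapprovalScore_le_of_powersetCard_subset_range hW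
    exact ⟨W, I, rfl, hI, hscore⟩
  · rintro ⟨C, I, rfl, hI, hscore⟩
    exact ⟨C, rfl, powersetCard_subset_range_of_disapprovalScore_le hinj.injOn (fun i _ ↦ he i)
      hI hscore⟩

/-- `G` is a simple graph on vertices `Fin n`, given by its list of
distinct edges `e 1, …, e m` (each a 2-element set of vertices). Candidates are
vertices and the vote for edge index `i` is `e i` itself. Then `G` has a clique of
size `k` iff there are a committee `C` of size `k` and an index set `I` of size at
least `k(k-1)/2` with disapproval score `∑_{i ∈ I} |C \ e i| ≤ (k-2)·k(k-1)/2`. -/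
theorem stmt_6 (n m k : ℕ) (hk : k ≤ n)
    (e : Fin m → Finset (Fin n))
    (he2 : ∀ i, (e i).card = 2)
    (hinj : Function.Injective e) :
    (∃ W : Finset (Fin n), W.card = k ∧
        ∀ u ∈ W, ∀ v ∈ W, u ≠ v → ∃ i, e i = {u, v})
    ↔ ∃ (C : Finset (Fin n)) (I : Finset (Fin m)),
        C.card = k ∧ k * (k - 1) / 2 ≤ I.card ∧
        (∑ i ∈ I, ((C \ e i).card : ℤ))
          ≤ ((k : ℤ) - 2) * ((k * (k - 1) / 2 : ℕ) : ℤ) := by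
  simpa only [powersetCard_two_subset_iff, Nat.choose_two_right] using!
    stmt_6_general k 2 e he2 hinj
end

section
/- Let G be a d-regular simple graph with vertex set {1,…,n} and edges e_1,…,e_m, and let k ≤ n. Identify candidates with edge indices and, for each vertex i ∈ {1,…,n}, define the vote S_i = { j ∈ {1,…,m} : i ∈ e_j } (the edges incident to vertex i, so |S_i| = d). Then G contains a clique of size k if and only if there exist a committee C* ⊆ {1,…,m} whose complement {1,…,m} ∖ C* has exactly k(k−1)/2 elements and an index set I ⊆ {1,…,n} with |I| ≥ n−k such that Σ_{i∈I} |C* Δ S_i| ≤ (n−k)·(m − k(k−1)/2 − d) (as integers). -/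
open scoped symmDiff

/-!
Since `|C ∆ S| = |C| - |S| + 2 |S \ C|`, the score of `C` over `n - k` votes of size `d` is at least
`(n - k) (|C| - d)`, with equality exactly when `C` contains all these votes; an index set with more
than `n - k` votes can be shrunk, which only lowers the score. Over the votes of the vertices in
`I`, this containment means that every edge outside `C` lies inside `W = Iᶜ`. As `|W| = k`, at most
`k.choose 2` edges fit inside `W`, with equality exactly when `W` is a clique. The same argument
applies to `r`-uniform hypergraphs, with `k.choose r` in place of `k.choose 2`.
-/

section Minisum

open Finset

variable {ι α : Type*} [DecidableEq α]

/-- The minisum score of the committee `C` over the votes `S i`, `i ∈ I`: the sum of the Hamming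
distances from `C` to these votes. -/
def minisumScore (S : ι → Finset α) (I : Finset ι) (C : Finset α) : ℕ :=
  ∑ i ∈ I, #(C ∆ S i)

theorem card_symmDiff_add_card (C S : Finset α) :
    #(C ∆ S) + #S = #C + 2 * #(S \ C) := by
  have card_split : #(C ∆ S) = #(C \ S) + #(S \ C) := by
    rw [symmDiff_def, sup_eq_union, card_union_of_disjoint disjoint_sdiff_sdiff]
  have card_sdiff_swap : #(C \ S) + #S = #(S \ C) + #C := by
    rw [card_sdiff_add_card, card_sdiff_add_card, union_comm]
  omega

theorem minisumScore_eq_sum_add (S : ι → Finset α) (I : Finset ι) (C : Finset α) :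
    (minisumScore S I C : ℤ) = ∑ i ∈ I, ((#C : ℤ) - #(S i)) + 2 * ∑ i ∈ I, #(S i \ C) := by
  rw [minisumScore, Nat.cast_sum, Nat.cast_sum, mul_sum, ← sum_add_distrib]
  refine sum_congr rfl fun i _ => ?_
  have := card_symmDiff_add_card C (S i)
  omega

theorem minisumScore_le_sum_iff_forall_subset (S : ι → Finset α) (I : Finset ι) (C : Finset α) :
    (minisumScore S I C : ℤ) ≤ ∑ i ∈ I, ((#C : ℤ) - #(S i)) ↔ ∀ i ∈ I, S i ⊆ C := by
  calc (minisumScore S I C : ℤ) ≤ ∑ i ∈ I, ((#C : ℤ) - #(S i))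
      ↔ ∑ i ∈ I, #(S i \ C) = 0 := by rw [minisumScore_eq_sum_add]; omega
    _ ↔ ∀ i ∈ I, S i ⊆ C := by simp only [sum_eq_zero_iff, card_eq_zero, sdiff_eq_empty_iff_subset]

theorem minisumScore_mono (S : ι → Finset α) (C : Finset α) :
    Monotone fun I => minisumScore S I C :=
  fun _ _ hIJ => sum_le_sum_of_subset hIJ

theorem exists_minisumScore_le_iff_exists_forall_subset {S : ι → Finset α} {d : ℕ}
    (hS : ∀ i, #(S i) = d) (C : Finset α) (t : ℕ) :
    (∃ I, t ≤ #I ∧ (minisumScore S I C : ℤ) ≤ t * ((#C : ℤ) - d)) ↔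
      ∃ I, #I = t ∧ ∀ i ∈ I, S i ⊆ C := by
  have score_le_iff (I : Finset ι) :
      (minisumScore S I C : ℤ) ≤ #I * ((#C : ℤ) - d) ↔ ∀ i ∈ I, S i ⊆ C := by
    simpa only [hS, sum_const, nsmul_eq_mul] using minisumScore_le_sum_iff_forall_subset S I C
  constructor
  · rintro ⟨I, htI, hscore⟩
    obtain ⟨J, hJI, rfl⟩ := exists_subset_card_eq htI
    exact ⟨J, rfl, (score_le_iff J).1 <|
      (Nat.cast_le.2 (minisumScore_mono S C hJI)).trans hscore⟩
  · rintro ⟨I, rfl, hsub⟩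
    exact ⟨I, le_rfl, (score_le_iff I).2 hsub⟩

end Minisum

section Hypergraph

open Finset

variable {V E : Type*}

theorem forall_mem_powersetCard_mem_range_iff {e : E → Finset V} {r : ℕ}
    (huniform : ∀ j, #(e j) = r) (hinj : Function.Injective e) (W : Finset V) :
    (∀ s ∈ W.powersetCard r, s ∈ Set.range e) ↔
      ∃ D : Finset E, #D = (#W).choose r ∧ ∀ j ∈ D, e j ⊆ W := by
  classical
  constructor
  · intro hclique
    refine ⟨(W.powersetCard r).preimage e hinj.injOn, ?_, fun j hj =>
      (mem_powersetCard.1 (mem_preimage.1 hj)).1⟩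
    rw [card_preimage, filter_true_of_mem hclique, card_powersetCard]
  · rintro ⟨D, hD, hDW⟩
    have image_subset : D.image e ⊆ W.powersetCard r :=
      image_subset_iff.2 fun j hj => mem_powersetCard.2 ⟨hDW j hj, huniform j⟩
    have image_eq : D.image e = W.powersetCard r :=
      eq_of_subset_of_card_le image_subset <| by
        rw [card_image_of_injective _ hinj, hD, card_powersetCard]
    intro s hs
    obtain ⟨j, -, hj⟩ := mem_image.1 (image_eq ▸ hs)
    exact ⟨j, hj⟩

variable [DecidableEq V]

/-- The vote of the vertex `v` in the hypergraph with edges `e j`: the set of indices of the edges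
incident to `v`. -/
def incidenceVote [Fintype E] (e : E → Finset V) (v : V) : Finset E :=
  {j | v ∈ e j}

theorem forall_incidenceVote_subset_iff [Fintype V] [Fintype E] [DecidableEq E] (e : E → Finset V)
    (I : Finset V) (C : Finset E) :
    (∀ v ∈ I, incidenceVote e v ⊆ C) ↔ ∀ j ∈ Cᶜ, e j ⊆ Iᶜ := by
  simp only [incidenceVote, subset_iff, mem_filter, mem_univ, true_and, mem_compl]
  grind

theorem forall_mem_powersetCard_two_iff {W : Finset V} {p : Finset V → Prop} :
    (∀ s ∈ W.powersetCard 2, p s) ↔ ∀ u ∈ W, ∀ v ∈ W, u ≠ v → p {u, v} := by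
  constructor
  · intro h u hu v hv huv
    exact h _ (mem_powersetCard.2 ⟨insert_subset hu (singleton_subset_iff.2 hv), card_pair huv⟩)
  · intro h s hs
    obtain ⟨hsW, hs2⟩ := mem_powersetCard.1 hs
    obtain ⟨u, v, huv, rfl⟩ := card_eq_two.1 hs2
    exact h u (hsW (mem_insert_self u {v})) v (hsW (by simp)) huv

theorem exists_forall_subset_iff_exists_forall_incidenceVote_subset [Fintype V] [Fintype E]
    [DecidableEq E] (e : E → Finset V) {k : ℕ} (hk : k ≤ Fintype.card V) (q : ℕ) :
    (∃ W : Finset V, #W = k ∧ ∃ D : Finset E, #D = q ∧ ∀ j ∈ D, e j ⊆ W) ↔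
      ∃ C : Finset E, #Cᶜ = q ∧
        ∃ I : Finset V, #I = Fintype.card V - k ∧ ∀ v ∈ I, incidenceVote e v ⊆ C := by
  constructor
  · rintro ⟨W, rfl, D, rfl, hDW⟩
    refine ⟨Dᶜ, by rw [compl_compl], Wᶜ, card_compl W, ?_⟩
    rwa [forall_incidenceVote_subset_iff, compl_compl, compl_compl]
  · rintro ⟨C, hC, I, hI, hsub⟩
    refine ⟨Iᶜ, ?_, Cᶜ, hC, (forall_incidenceVote_subset_iff e I C).1 hsub⟩
    rw [card_compl, hI, Nat.sub_sub_self hk]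

theorem stmt_11_general [Fintype V] [Fintype E] [DecidableEq E] {e : E → Finset V} {r d k : ℕ}
    (hk : k ≤ Fintype.card V) (huniform : ∀ j, #(e j) = r) (hinj : Function.Injective e)
    (hreg : ∀ v, #(incidenceVote e v) = d) :
    (∃ W : Finset V, #W = k ∧ ∀ s ∈ W.powersetCard r, s ∈ Set.range e) ↔
      ∃ (C : Finset E) (I : Finset V), #Cᶜ = k.choose r ∧ Fintype.card V - k ≤ #I ∧
        (minisumScore (incidenceVote e) I C : ℤ) ≤
          ((Fintype.card V : ℤ) - k) * ((Fintype.card E : ℤ) - k.choose r - d) := by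
  calc (∃ W : Finset V, #W = k ∧ ∀ s ∈ W.powersetCard r, s ∈ Set.range e)
      ↔ ∃ W : Finset V, #W = k ∧ ∃ D : Finset E, #D = k.choose r ∧ ∀ j ∈ D, e j ⊆ W := by
        refine exists_congr fun W => and_congr_right ?_
        rintro rfl
        exact forall_mem_powersetCard_mem_range_iff huniform hinj W
    _ ↔ ∃ C : Finset E, #Cᶜ = k.choose r ∧
          ∃ I, #I = Fintype.card V - k ∧ ∀ v ∈ I, incidenceVote e v ⊆ C :=
        exists_forall_subset_iff_exists_forall_incidenceVote_subset e hk _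
    _ ↔ _ := by
        refine exists_congr fun C => Iff.trans (and_congr_right fun hC => ?_) exists_and_left.symm
        have card_C : (#C : ℤ) = Fintype.card E - k.choose r := by
          have := card_add_card_compl C
          omega
        rw [← exists_minisumScore_le_iff_exists_forall_subset hreg, card_C, Nat.cast_sub hk]

end Hypergraph

/-- `G` is a `d`-regular simple graph on vertices `Fin n`, given by its
list of distinct edges `e 1, …, e m`. Candidates are edge indices; the vote of vertex
`i` is the set of edges incident to `i`. Then `G` has a clique of size `k` iff there
are a committee `C` whose complement has exactly `k(k-1)/2` elements and an index set
`I` of size at least `n - k` with minisum score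
`∑_{i ∈ I} |C ∆ S i| ≤ (n-k)(m - k(k-1)/2 - d)`. -/
theorem stmt_11 (n m d k : ℕ) (hk : k ≤ n)
    (e : Fin m → Finset (Fin n))
    (he2 : ∀ j, (e j).card = 2)
    (hinj : Function.Injective e)
    (hreg : ∀ v : Fin n, (Finset.univ.filter fun j => v ∈ e j).card = d) :
    (∃ W : Finset (Fin n), W.card = k ∧
        ∀ u ∈ W, ∀ v ∈ W, u ≠ v → ∃ j, e j = {u, v})
    ↔ ∃ (C : Finset (Fin m)) (I : Finset (Fin n)),
        Cᶜ.card = k * (k - 1) / 2 ∧ n - k ≤ I.card ∧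
        (∑ i ∈ I, ((C ∆ (Finset.univ.filter fun j : Fin m => i ∈ e j)).card : ℤ))
          ≤ ((n : ℤ) - (k : ℤ)) * ((m : ℤ) - ((k * (k - 1) / 2 : ℕ) : ℤ) - (d : ℤ)) := by
  simpa only [forall_mem_powersetCard_two_iff, Set.mem_range, Nat.choose_two_right,
    Fintype.card_fin, minisumScore, incidenceVote, Nat.cast_sum] using
    stmt_11_general (hk.trans_eq (Fintype.card_fin n).symm) he2 hinj hreg
end
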